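/- arXiv:1503.04048 — 2 statements merged into one kernel-verified Lean document; each statement's English description precedes it below -/
import Mathlib

section
/- For the directed path P_n = (v₁, v₂, ..., v_n) with n ≥ 1 vertices, γ_oso(P_n) = ⌈2n/3⌉. -/
/-!
When out-degrees are at most one and there are no 2-cycles, `S` is an OSODS exactly when every
vertex `v` outside `S` has predecessors `w → u → v` with `w, u ∈ S`: `u` defends `v`, and `w` then
dominates the vacated `u`. The `2|Sᶜ|` vertices `u`, `w` so obtained are pairwise distinct, since a
vertex determines its out-neighbor and the out-neighbor of `w` lies in `S` while that of `u` does
not. Hence `2|Sᶜ| ≤ |S|`, that is `2|V| ≤ 3|S|`. On the path, omitting every third vertex attains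
this bound up to rounding.
-/

open Finset

variable {V : Type*}

/-- `S` is an out-dominating set of the digraph with arc relation `A`. -/
def OutDom (A : V → V → Prop) (S : Finset V) : Prop :=
  ∀ v : V, v ∉ S → ∃ u ∈ S, A u v

/-- `S` is an in-dominating set. -/
def InDom (A : V → V → Prop) (S : Finset V) : Prop :=
  ∀ v : V, v ∉ S → ∃ u ∈ S, A v u

/-- `S` is a dominating set of the underlying undirected graph of the digraph `A`. -/
def DomG (A : V → V → Prop) (S : Finset V) : Prop :=
  ∀ v : V, v ∉ S → ∃ u ∈ S, A u v ∨ A v u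

/-- Secure dominating set of the underlying undirected graph. -/
def SDS [DecidableEq V] (A : V → V → Prop) (S : Finset V) : Prop :=
  DomG A S ∧ ∀ v : V, v ∉ S → ∃ u ∈ S, (A u v ∨ A v u) ∧ DomG A (insert v (S.erase u))

/-- Out-secure dominating set (OSDS). -/
def OSDS [DecidableEq V] (A : V → V → Prop) (S : Finset V) : Prop :=
  DomG A S ∧ ∀ v : V, v ∉ S → ∃ u ∈ S, A u v ∧ DomG A (insert v (S.erase u))

/-- Secure out-dominating set (SODS). -/
def SODS [DecidableEq V] (A : V → V → Prop) (S : Finset V) : Prop :=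
  OutDom A S ∧ ∀ v : V, v ∉ S → ∃ u ∈ S, (A v u ∨ A u v) ∧ OutDom A (insert v (S.erase u))

/-- Out-secure out-dominating set (OSODS). -/
def OSODS [DecidableEq V] (A : V → V → Prop) (S : Finset V) : Prop :=
  OutDom A S ∧ ∀ v : V, v ∉ S → ∃ u ∈ S, A u v ∧ OutDom A (insert v (S.erase u))

/-- In-secure out-dominating set (ISODS). -/
def ISODS [DecidableEq V] (A : V → V → Prop) (S : Finset V) : Prop :=
  OutDom A S ∧ ∀ v : V, v ∉ S → ∃ u ∈ S, A v u ∧ OutDom A (insert v (S.erase u))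

/-- Twin dominating set. -/
def TwinDom (A : V → V → Prop) (S : Finset V) : Prop :=
  ∀ v : V, v ∉ S → (∃ u ∈ S, A v u) ∧ (∃ u ∈ S, A u v)

/-- The out-domination number `γ⁺`. -/
noncomputable def gammaPlus [Fintype V] (A : V → V → Prop) : ℕ :=
  sInf {k | ∃ S : Finset V, OutDom A S ∧ S.card = k}

/-- The in-domination number `γ⁻`. -/
noncomputable def gammaMinus [Fintype V] (A : V → V → Prop) : ℕ :=
  sInf {k | ∃ S : Finset V, InDom A S ∧ S.card = k}

/-- The secure domination number of the underlying undirected graph, `γ_s`. -/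
noncomputable def gammaS [Fintype V] [DecidableEq V] (A : V → V → Prop) : ℕ :=
  sInf {k | ∃ S : Finset V, SDS A S ∧ S.card = k}

/-- The out-secure domination number `γ_os`. -/
noncomputable def gammaOS [Fintype V] [DecidableEq V] (A : V → V → Prop) : ℕ :=
  sInf {k | ∃ S : Finset V, OSDS A S ∧ S.card = k}

/-- The secure out-domination number `γ_so`. -/
noncomputable def gammaSO [Fintype V] [DecidableEq V] (A : V → V → Prop) : ℕ :=
  sInf {k | ∃ S : Finset V, SODS A S ∧ S.card = k}

/-- The out-secure out-domination number `γ_oso`. -/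
noncomputable def gammaOSO [Fintype V] [DecidableEq V] (A : V → V → Prop) : ℕ :=
  sInf {k | ∃ S : Finset V, OSODS A S ∧ S.card = k}

/-- The in-secure out-domination number `γ_iso`. -/
noncomputable def gammaISO [Fintype V] [DecidableEq V] (A : V → V → Prop) : ℕ :=
  sInf {k | ∃ S : Finset V, ISODS A S ∧ S.card = k}

/-- The twin domination number `γ*`. -/
noncomputable def gammaTwin [Fintype V] (A : V → V → Prop) : ℕ :=
  sInf {k | ∃ S : Finset V, TwinDom A S ∧ S.card = k}

/-- Out-degree `d⁺(u)`. -/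
noncomputable def outDeg (A : V → V → Prop) (u : V) : ℕ := Nat.card {v | A u v}

/-- In-degree `d⁻(u)`. -/
noncomputable def inDeg (A : V → V → Prop) (u : V) : ℕ := Nat.card {v | A v u}

/-- Maximum out-degree `Δ⁺`. -/
noncomputable def maxOutDeg [Fintype V] (A : V → V → Prop) : ℕ :=
  Finset.univ.sup fun u => outDeg A u

/-- Minimum out-degree `δ⁺`. -/
noncomputable def minOutDeg (A : V → V → Prop) : ℕ := sInf (Set.range fun u => outDeg A u)

/-- Minimum in-degree `δ⁻`. -/
noncomputable def minInDeg (A : V → V → Prop) : ℕ := sInf (Set.range fun u => inDeg A u)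

/-- The set of out-private neighbors `pn⁺(u,S)`: vertices `w` with `N⁻[w] ∩ S = {u}`. -/
def pnPlus (A : V → V → Prop) (S : Finset V) (u : V) : Set V :=
  {w | {x | A x w ∨ x = w} ∩ ↑S = {u}}

/-- The set of in-private neighbors `pn⁻(u,S)`: vertices `w` with `N⁺[w] ∩ S = {u}`. -/
def pnMinus (A : V → V → Prop) (S : Finset V) (u : V) : Set V :=
  {w | {x | A w x ∨ x = w} ∩ ↑S = {u}}

/-- `A` is an orientation of the simple graph `G`. -/
def IsOrientation (G : SimpleGraph V) (A : V → V → Prop) : Prop :=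
  (∀ u v : V, G.Adj u v ↔ (A u v ∨ A v u)) ∧ (∀ u v : V, A u v → ¬ A v u)

/-- The arc relation of the directed path `P_n` on `Fin n`. -/
def pathArc (n : ℕ) : Fin n → Fin n → Prop := fun i j => (i : ℕ) + 1 = (j : ℕ)

/-- The arc relation of the directed cycle `C_n` on `Fin n`. -/
def cycleArc (n : ℕ) : Fin n → Fin n → Prop := fun i j => ((i : ℕ) + 1) % n = (j : ℕ)

lemma natCeil_natCast_div_natCast {K : Type*} [Field K] [LinearOrder K] [IsStrictOrderedRing K]
    [FloorSemiring K] (a : ℕ) {b : ℕ} (hb : 0 < b) : ⌈(a / b : K)⌉₊ = a ⌈/⌉ b := by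
  refine eq_of_forall_ge_iff fun c => ?_
  rw [Nat.ceil_le, div_le_iff₀' (by exact_mod_cast hb), ceilDiv_le_iff_le_mul hb]
  norm_cast

lemma card_filter_val_eq_count (n : ℕ) (p : ℕ → Prop) [DecidablePred p] :
    #{i : Fin n | p i} = n.count p := by
  rw [Nat.count_eq_card_filter_range, ← card_map Fin.valEmbedding]
  congr 1
  ext k
  simp [Fin.exists_iff, and_comm]

lemma count_mod_three_ne_two (n : ℕ) : n.count (· % 3 ≠ 2) = (2 * n) ⌈/⌉ 3 := by
  rw [Nat.ceilDiv_eq_add_pred_div]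
  induction n with
  | zero => simp
  | succ n ih =>
    rw [Nat.count_succ, ih]
    grind

section Digraph

variable [DecidableEq V] {A : V → V → Prop} {S : Finset V}

lemma osods_iff_forall_exists_arc_arc [Std.Asymm A] (hA : Relator.RightUnique A) :
    OSODS A S ↔ ∀ v ∉ S, ∃ u ∈ S, ∃ w ∈ S, A w u ∧ A u v := by
  constructor
  · rintro ⟨-, hsecure⟩ v hv
    obtain ⟨u, hu, huv, hdom⟩ := hsecure v hv
    have hu_vacated : u ∉ insert v (S.erase u) := by
      simpa using ne_of_mem_of_not_mem hu hv
    obtain ⟨w, hw, hwu⟩ := hdom u hu_vacated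
    have hwv : w ≠ v := by
      rintro rfl
      exact Std.Asymm.asymm _ _ huv hwu
    exact ⟨u, hu, w, mem_of_mem_erase (mem_of_mem_insert_of_ne hw hwv), hwu, huv⟩
  · intro h
    refine ⟨fun v hv => ?_, fun v hv => ?_⟩
    · obtain ⟨u, hu, -, -, -, huv⟩ := h v hv
      exact ⟨u, hu, huv⟩
    obtain ⟨u, hu, w, hw, hwu, huv⟩ := h v hv
    refine ⟨u, hu, huv, fun x hx => ?_⟩
    have dominates_of_ne {y : V} (hy : y ∈ S) (hyu : y ≠ u) (hyx : A y x) :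
        ∃ y ∈ insert v (S.erase u), A y x :=
      ⟨y, mem_insert_of_mem (mem_erase_of_ne_of_mem hyu hy), hyx⟩
    obtain rfl | hxu := eq_or_ne x u
    · refine dominates_of_ne hw ?_ hwu
      rintro rfl
      exact Std.Asymm.asymm _ _ hwu hwu
    · obtain ⟨hxv, hxS⟩ : x ≠ v ∧ x ∉ S := by simpa [hxu] using hx
      obtain ⟨y, hy, -, -, -, hyx⟩ := h x hxS
      refine dominates_of_ne hy ?_ hyx
      rintro rfl
      exact hxv (hA hyx huv)

variable [Fintype V]

lemma OSODS.two_mul_card_compl_le_card [Std.Asymm A] (hA : Relator.RightUnique A)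
    (hS : OSODS A S) : 2 * #Sᶜ ≤ #S := by
  have hSc : ∀ v ∈ Sᶜ, ∃ u ∈ S, ∃ w ∈ S, A w u ∧ A u v := fun v hv =>
    (osods_iff_forall_exists_arc_arc hA).1 hS v (mem_compl.1 hv)
  choose! pred pred_mem pred₂ pred₂_mem arc₂ arc using hSc
  have pred_injOn : Set.InjOn pred ↑Sᶜ := fun v hv v' hv' h =>
    hA (arc v hv) (h ▸ arc v' hv')
  have pred₂_injOn : Set.InjOn pred₂ ↑Sᶜ := fun v hv v' hv' h =>
    pred_injOn hv hv' (hA (arc₂ v hv) (h ▸ arc₂ v' hv'))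
  have disjoint_preds : Disjoint (Sᶜ.image pred) (Sᶜ.image pred₂) := by
    refine disjoint_left.2 fun x hx hx₂ => ?_
    obtain ⟨v, hv, rfl⟩ := mem_image.1 hx
    obtain ⟨v', hv', h⟩ := mem_image.1 hx₂
    have hvv' : v = pred v' := hA (arc v hv) (h ▸ arc₂ v' hv')
    exact mem_compl.1 hv (hvv' ▸ pred_mem v' hv')
  calc 2 * #Sᶜ = #(Sᶜ.image pred ∪ Sᶜ.image pred₂) := by
        rw [card_union_of_disjoint disjoint_preds, card_image_of_injOn pred_injOn,
          card_image_of_injOn pred₂_injOn, two_mul]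
    _ ≤ #S := card_le_card <|
        union_subset (image_subset_iff.2 pred_mem) (image_subset_iff.2 pred₂_mem)

lemma gammaOSO_le_card (hS : OSODS A S) : gammaOSO A ≤ #S :=
  Nat.sInf_le ⟨S, hS, rfl⟩

lemma exists_osods_card_eq_gammaOSO (A : V → V → Prop) :
    ∃ S : Finset V, OSODS A S ∧ #S = gammaOSO A :=
  have osods_univ : OSODS A univ := ⟨by simp [OutDom], by simp⟩
  Nat.sInf_mem (s := {k | ∃ S : Finset V, OSODS A S ∧ #S = k}) ⟨_, univ, osods_univ, rfl⟩

theorem two_mul_card_ceilDiv_three_le_gammaOSO [Std.Asymm A] (hA : Relator.RightUnique A) :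
    (2 * Fintype.card V) ⌈/⌉ 3 ≤ gammaOSO A := by
  obtain ⟨S, hS, hcard⟩ := exists_osods_card_eq_gammaOSO A
  rw [← hcard, ceilDiv_le_iff_le_mul three_pos]
  have := hS.two_mul_card_compl_le_card hA
  have := card_add_card_compl S
  omega

end Digraph

section Path

variable (n : ℕ)

instance : Std.Asymm (pathArc n) :=
  ⟨fun i j (hij : (i : ℕ) + 1 = j) (hji : (j : ℕ) + 1 = i) => by omega⟩

lemma rightUnique_pathArc : Relator.RightUnique (pathArc n) :=
  fun _ _ _ hj hk => Fin.ext (hj.symm.trans hk)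

/-- The vertices `v₁, v₂, v₄, v₅, v₇, …` of the directed path, an out-secure out-dominating set of
minimum size. As `Fin n` counts from `0`, those omitted are the ones congruent to `2` mod `3`. -/
def pathOSODS : Finset (Fin n) := {v | (v : ℕ) % 3 ≠ 2}

lemma osods_pathOSODS : OSODS (pathArc n) (pathOSODS n) := by
  refine (osods_iff_forall_exists_arc_arc (rightUnique_pathArc n)).2 fun v hv => ?_
  have hv : (v : ℕ) % 3 = 2 := by simpa [pathOSODS] using hv
  refine ⟨⟨v - 1, by omega⟩, ?_, ⟨v - 2, by omega⟩, ?_, ?_, ?_⟩ <;>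
    simp only [pathOSODS, pathArc, mem_filter_univ] <;> omega

lemma card_pathOSODS : #(pathOSODS n) = (2 * n) ⌈/⌉ 3 :=
  (card_filter_val_eq_count n (· % 3 ≠ 2)).trans (count_mod_three_ne_two n)

end Path

/-- `γ_oso(P_n) = ⌈2n/3⌉`. -/
theorem stmt_6 (n : ℕ) (hn : 1 ≤ n) :
    gammaOSO (pathArc n) = ⌈(2 * (n : ℚ)) / 3⌉₊ := by
  have ceil_eq_ceilDiv : ⌈(2 * (n : ℚ)) / 3⌉₊ = (2 * n) ⌈/⌉ 3 := by
    exact_mod_cast natCeil_natCast_div_natCast (K := ℚ) (2 * n) three_pos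
  rw [ceil_eq_ceilDiv]
  apply le_antisymm
  · exact (gammaOSO_le_card (osods_pathOSODS n)).trans_eq (card_pathOSODS n)
  · simpa only [Fintype.card_fin] using
      two_mul_card_ceilDiv_three_le_gammaOSO (rightUnique_pathArc n)
end

section
/- For any digraph D without symmetric arcs (no pair of opposite arcs), γ_os(D) ≤ γ*(D), where γ*(D) is the twin domination number of D. -/
/-! A vertex `w` outside a twin dominating set `S` has an out-neighbour and an in-neighbour in `S`.
Were they equal, they would form a pair of opposite arcs with `w`; so `w` has two distinct
neighbours in `S`, and deleting any `u` from `S` leaves it dominated. When `u` is exchanged for an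
out-neighbour `v`, the vertex `u` itself is dominated by `v`. Hence `S` is out-secure dominating. -/

open Finset

variable {V : Type*}

/-- `S` is a 2-dominating set of the underlying undirected graph of the digraph `A`: every vertex
outside `S` has two distinct neighbours in `S`. Such an `S` still dominates every vertex outside it
after the deletion of any one of its members, as the exchange in `OSDS` requires. -/
def TwoDom (A : V → V → Prop) (S : Finset V) : Prop :=
  ∀ v : V, v ∉ S → ∃ x ∈ S, ∃ y ∈ S, x ≠ y ∧ (A x v ∨ A v x) ∧ (A y v ∨ A v y)

section

variable {A : V → V → Prop} {S : Finset V}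

theorem OutDom.domG (hS : OutDom A S) : DomG A S := fun v hv =>
  let ⟨u, hu, huv⟩ := hS v hv
  ⟨u, hu, .inl huv⟩

theorem TwinDom.outDom (hS : TwinDom A S) : OutDom A S := fun v hv => (hS v hv).2

theorem TwinDom.twoDom (hsym : ∀ u v : V, A u v → ¬ A v u) (hS : TwinDom A S) : TwoDom A S := by
  intro v hv
  obtain ⟨⟨x, hx, hvx⟩, y, hy, hyv⟩ := hS v hv
  have hxy : x ≠ y := by
    rintro rfl
    exact hsym v x hvx hyv
  exact ⟨x, hx, y, hy, hxy, .inr hvx, .inl hyv⟩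

variable [DecidableEq V]

theorem TwoDom.exists_mem_erase (hS : TwoDom A S) (u : V) {w : V} (hw : w ∉ S) :
    ∃ x ∈ S.erase u, A x w ∨ A w x := by
  obtain ⟨x, hx, y, hy, hxy, hxw, hyw⟩ := hS w hw
  rcases eq_or_ne x u with rfl | hxu
  · exact ⟨y, mem_erase.2 ⟨hxy.symm, hy⟩, hyw⟩
  · exact ⟨x, mem_erase.2 ⟨hxu, hx⟩, hxw⟩

theorem TwoDom.domG_insert_erase (hS : TwoDom A S) {u v : V} (huv : A u v ∨ A v u) :
    DomG A (insert v (S.erase u)) := by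
  intro w hw
  rcases eq_or_ne w u with rfl | hwu
  · exact ⟨v, mem_insert_self v _, huv.symm⟩
  · have hwS : w ∉ S := fun h => hw (mem_insert_of_mem (mem_erase.2 ⟨hwu, h⟩))
    obtain ⟨x, hx, hxw⟩ := hS.exists_mem_erase u hwS
    exact ⟨x, mem_insert_of_mem hx, hxw⟩

theorem OutDom.osds_of_twoDom (hS : OutDom A S) (hS₂ : TwoDom A S) : OSDS A S := by
  refine ⟨hS.domG, fun v hv => ?_⟩
  obtain ⟨u, hu, huv⟩ := hS v hv
  exact ⟨u, hu, huv, hS₂.domG_insert_erase (.inl huv)⟩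

theorem TwinDom.osds (hsym : ∀ u v : V, A u v → ¬ A v u) (hS : TwinDom A S) : OSDS A S :=
  hS.outDom.osds_of_twoDom (hS.twoDom hsym)

theorem gammaOS_le_card [Fintype V] (hS : OSDS A S) : gammaOS A ≤ S.card :=
  Nat.sInf_le ⟨S, hS, rfl⟩

end

theorem twinDom_univ [Fintype V] (A : V → V → Prop) : TwinDom A univ :=
  fun v hv => absurd (mem_univ v) hv

theorem exists_twinDom_card_eq_gammaTwin [Fintype V] (A : V → V → Prop) :
    ∃ S : Finset V, TwinDom A S ∧ S.card = gammaTwin A :=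
  Nat.sInf_mem (s := {k | ∃ S : Finset V, TwinDom A S ∧ S.card = k}) ⟨_, univ, twinDom_univ A, rfl⟩

/-- `γ_os(D) ≤ γ*(D)` for digraphs without symmetric arcs. -/
theorem stmt_17 [Fintype V] [DecidableEq V] (A : V → V → Prop) (hloop : ∀ v : V, ¬ A v v)
    (hsym : ∀ u v : V, A u v → ¬ A v u) :
    gammaOS A ≤ gammaTwin A := by
  obtain ⟨S, hS, hcard⟩ := exists_twinDom_card_eq_gammaTwin A
  calc gammaOS A ≤ S.card := gammaOS_le_card (hS.osds hsym)
    _ = gammaTwin A := hcard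
end
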